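/- Set b(p) := √(λ̄ − 2Γ(p)) (so b(0) = √λ̄) and let μ̄ ≥ 0. Suppose z : [p₀,0] → ℝ is C¹ with z(p₀) = 0, z′(p₀) = 1, p ↦ b(p)³z′(p) is differentiable on (p₀,0) with derivative μ̄·b·z, and λ̄^{3/2}·z′(0) = (g + σμ̄)·z(0). Suppose w : [p₀,0] → ℝ is C¹ with w(p₀) = w′(p₀) = 0 and such that p ↦ b(p)³w′(p) + (3/2)·b(p)·z′(p) is differentiable on (p₀,0) with derivative μ̄·b·w + (μ̄/(2b))·z. Then λ̄^{3/2}·w′(0) + (3/2)·λ̄^{1/2}·z′(0) − (g + σμ̄)·w(0) = (1/z(0))·∫_{p₀}^0 ( (3b(p)/2)·z′(p)² + (μ̄/(2b(p)))·z(p)² ) dp, and this quantity is strictly positive. -/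

import Mathlib

open Set

/-!
The functions `z` and `w` solve `(p z′)′ = q z` and `(p w′ + r z′)′ = q w + s z` with `p = b³`,
`q = μ̄ b`, `r = 3b/2`, `s = μ̄/(2b)`. Cross-multiplying the two equations by `w` and `z` cancels
the `q`-terms (the Lagrange identity), so the bracket `(p w′ + r z′) z - p z′ w` has derivative
`r z′² + s z²`. It vanishes at the left endpoint, and the Robin condition on `z` turns its value at
the right endpoint into `z(0)` times the left-hand side of the claim. It remains to see that
`z(0) > 0`: as `(p z′ z)′ = q z² + p z′² ≥ 0`, the product `z z′` stays nonnegative, so `z²` is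
nondecreasing and `z`, positive just after the left endpoint, never returns to zero.
-/

open scoped Topology

theorem eventually_lt_nhdsGT_of_hasDerivWithinAt_pos {f : ℝ → ℝ} {f' a : ℝ}
    (hf : HasDerivWithinAt f f' (Ioi a) a) (hf' : 0 < f') : ∀ᶠ x in 𝓝[>] a, f a < f x := by
  rw [hasDerivWithinAt_iff_tendsto_slope' self_notMem_Ioi] at hf
  filter_upwards [hf.eventually_const_lt hf', self_mem_nhdsWithin] with x hslope hx
  exact (slope_pos_iff_of_le (le_of_lt hx)).1 hslope

theorem pos_of_monotoneOn_sq {f : ℝ → ℝ} {a c : ℝ} (hac : a ≤ c)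
    (hf : ContinuousOn f (Icc a c)) (hmono : MonotoneOn (fun x => f x ^ 2) (Icc a c))
    (ha : 0 < f a) : 0 < f c := by
  by_contra! hc
  obtain ⟨x, hx, hfx⟩ := intermediate_value_Icc' hac hf ⟨hc, ha.le⟩
  have hsq : f a ^ 2 ≤ 0 := calc
    f a ^ 2 ≤ f x ^ 2 := hmono (left_mem_Icc.2 hac) hx hx.1
    _ = 0 := by rw [hfx, zero_pow two_ne_zero]
  exact hsq.not_gt (pow_pos ha 2)

section SturmLiouville

variable {a c : ℝ} {p q r s z z' w w' : ℝ → ℝ}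

theorem monotoneOn_flux_mul_of_sturmLiouville
    (hp : ContinuousOn p (Icc a c)) (hp0 : ∀ x ∈ Ioo a c, 0 ≤ p x)
    (hq0 : ∀ x ∈ Ioo a c, 0 ≤ q x)
    (hz : ContinuousOn z (Icc a c)) (hz' : ContinuousOn z' (Icc a c))
    (hdz : ∀ x ∈ Ioo a c, HasDerivAt z (z' x) x)
    (hode : ∀ x ∈ Ioo a c, HasDerivAt (fun y => p y * z' y) (q x * z x) x) :
    MonotoneOn (fun x => p x * z' x * z x) (Icc a c) := by
  refine monotoneOn_of_hasDerivWithinAt_nonneg (convex_Icc a c) (by fun_prop)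
    (f' := fun x => q x * z x * z x + p x * z' x * z' x) ?_ ?_ <;>
    rw [interior_Icc] <;> intro x hx
  · exact ((hode x hx).mul (hdz x hx)).hasDerivWithinAt
  · rw [mul_assoc, mul_assoc]
    exact add_nonneg (mul_nonneg (hq0 x hx) (mul_self_nonneg _))
      (mul_nonneg (hp0 x hx) (mul_self_nonneg _))

theorem monotoneOn_sq_of_sturmLiouville
    (hp : ContinuousOn p (Icc a c)) (hppos : ∀ x ∈ Icc a c, 0 < p x)
    (hq0 : ∀ x ∈ Ioo a c, 0 ≤ q x)
    (hz : ContinuousOn z (Icc a c)) (hz' : ContinuousOn z' (Icc a c))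
    (hdz : ∀ x ∈ Ioo a c, HasDerivAt z (z' x) x)
    (hode : ∀ x ∈ Ioo a c, HasDerivAt (fun y => p y * z' y) (q x * z x) x)
    (hza : 0 ≤ z' a * z a) : MonotoneOn (fun x => z x ^ 2) (Icc a c) := by
  have hflux := monotoneOn_flux_mul_of_sturmLiouville hp
    (fun x hx => (hppos x (Ioo_subset_Icc_self hx)).le) hq0 hz hz' hdz hode
  refine monotoneOn_of_hasDerivWithinAt_nonneg (convex_Icc a c) (by fun_prop)
    (f' := fun x => 2 * (z' x * z x)) ?_ ?_ <;> rw [interior_Icc] <;> intro x hx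
  · exact ((hdz x hx).pow 2).hasDerivWithinAt.congr_deriv (by push_cast; ring)
  · have hxI := Ioo_subset_Icc_self hx
    have haI : a ∈ Icc a c := left_mem_Icc.2 (hxI.1.trans hxI.2)
    have hpzz : 0 ≤ p x * (z' x * z x) := calc
      0 ≤ p a * (z' a * z a) := mul_nonneg (hppos a haI).le hza
      _ ≤ p x * (z' x * z x) := by simpa only [mul_assoc] using hflux haI hxI hxI.1
    exact mul_nonneg zero_le_two (nonneg_of_mul_nonneg_right hpzz (hppos x hxI))

theorem pos_right_of_sturmLiouville (hac : a < c)
    (hp : ContinuousOn p (Icc a c)) (hppos : ∀ x ∈ Icc a c, 0 < p x)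
    (hq0 : ∀ x ∈ Ioo a c, 0 ≤ q x) (hz' : ContinuousOn z' (Icc a c))
    (hdz : ∀ x ∈ Icc a c, HasDerivWithinAt z (z' x) (Icc a c) x)
    (hode : ∀ x ∈ Ioo a c, HasDerivAt (fun y => p y * z' y) (q x * z x) x)
    (hza : 0 ≤ z a) (hz'a : 0 < z' a) : 0 < z c := by
  have hz : ContinuousOn z (Icc a c) := HasDerivWithinAt.continuousOn hdz
  have hdz_Ioo : ∀ x ∈ Ioo a c, HasDerivAt z (z' x) x := fun x hx =>
    (hdz x (Ioo_subset_Icc_self hx)).hasDerivAt (Icc_mem_nhds hx.1 hx.2)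
  have hdza : HasDerivWithinAt z (z' a) (Ioi a) a :=
    (hdz a (left_mem_Icc.2 hac.le)).mono_of_mem_nhdsWithin (Icc_mem_nhdsGT hac)
  have hsq := monotoneOn_sq_of_sturmLiouville hp hppos hq0 hz hz' hdz_Ioo hode
    (mul_nonneg hz'a.le hza)
  obtain ⟨x, hzx, hx⟩ := ((eventually_lt_nhdsGT_of_hasDerivWithinAt_pos hdza hz'a).and
    (Ioc_mem_nhdsGT hac)).exists
  have hsub : Icc x c ⊆ Icc a c := Icc_subset_Icc_left hx.1.le
  exact pos_of_monotoneOn_sq hx.2 (hz.mono hsub) (hsq.mono hsub) (hza.trans_lt hzx)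

/-- The Lagrange bracket (weighted Wronskian) of a solution `z` of `(p z′)′ = q z` and a solution
`w` of the perturbed equation `(p w′ + r z′)′ = q w + s z`. The derivatives are
separate arguments, so the bracket makes sense for arbitrary functions. -/
def lagrangeBracket (p r z z' w w' : ℝ → ℝ) (x : ℝ) : ℝ :=
  (p x * w' x + r x * z' x) * z x - p x * z' x * w x

theorem hasDerivAt_lagrangeBracket {x : ℝ}
    (hdz : HasDerivAt z (z' x) x) (hdw : HasDerivAt w (w' x) x)
    (hodez : HasDerivAt (fun y => p y * z' y) (q x * z x) x)
    (hodew : HasDerivAt (fun y => p y * w' y + r y * z' y) (q x * w x + s x * z x) x) :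
    HasDerivAt (lagrangeBracket p r z z' w w') (r x * z' x ^ 2 + s x * z x ^ 2) x :=
  ((hodew.mul hdz).sub (hodez.mul hdw)).congr_deriv (by ring)

theorem integral_eq_lagrangeBracket_sub (hac : a ≤ c)
    (hp : ContinuousOn p (Icc a c)) (hr : ContinuousOn r (Icc a c))
    (hs : ContinuousOn s (Icc a c))
    (hz' : ContinuousOn z' (Icc a c)) (hw' : ContinuousOn w' (Icc a c))
    (hdz : ∀ x ∈ Icc a c, HasDerivWithinAt z (z' x) (Icc a c) x)
    (hdw : ∀ x ∈ Icc a c, HasDerivWithinAt w (w' x) (Icc a c) x)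
    (hodez : ∀ x ∈ Ioo a c, HasDerivAt (fun y => p y * z' y) (q x * z x) x)
    (hodew : ∀ x ∈ Ioo a c,
      HasDerivAt (fun y => p y * w' y + r y * z' y) (q x * w x + s x * z x) x) :
    ∫ x in a..c, (r x * z' x ^ 2 + s x * z x ^ 2) =
      lagrangeBracket p r z z' w w' c - lagrangeBracket p r z z' w w' a := by
  have hz : ContinuousOn z (Icc a c) := HasDerivWithinAt.continuousOn hdz
  have hw : ContinuousOn w (Icc a c) := HasDerivWithinAt.continuousOn hdw
  have hbracket : ContinuousOn (lagrangeBracket p r z z' w w') (Icc a c) := by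
    unfold lagrangeBracket
    fun_prop
  refine intervalIntegral.integral_eq_sub_of_hasDerivAt_of_le hac hbracket (fun x hx => ?_)
    (ContinuousOn.intervalIntegrable_of_Icc hac (by fun_prop))
  have hxI := Ioo_subset_Icc_self hx
  have hnhds := Icc_mem_nhds hx.1 hx.2
  exact hasDerivAt_lagrangeBracket ((hdz x hxI).hasDerivAt hnhds) ((hdw x hxI).hasDerivAt hnhds)
    (hodez x hx) (hodew x hx)

theorem lagrangeBracket_eq_zero {x : ℝ} (hz : z x = 0) (hw : w x = 0) :
    lagrangeBracket p r z z' w w' x = 0 := by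
  simp only [lagrangeBracket, hz, hw, mul_zero, sub_zero]

theorem lagrangeBracket_eq_mul_of_robin {κ x : ℝ} (hrobin : p x * z' x = κ * z x) :
    lagrangeBracket p r z z' w w' x = z x * (p x * w' x + r x * z' x - κ * w x) := by
  rw [lagrangeBracket, hrobin]
  ring

theorem integral_mul_deriv_sq_add_mul_sq_pos (hac : a < c)
    (hr : ContinuousOn r (Icc a c)) (hs : ContinuousOn s (Icc a c))
    (hr0 : ∀ x ∈ Icc a c, 0 < r x) (hs0 : ∀ x ∈ Icc a c, 0 ≤ s x)
    (hz : ContinuousOn z (Icc a c)) (hz' : ContinuousOn z' (Icc a c)) (hz'a : z' a ≠ 0) :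
    0 < ∫ x in a..c, (r x * z' x ^ 2 + s x * z x ^ 2) := by
  have haI : a ∈ Icc a c := left_mem_Icc.2 hac.le
  refine intervalIntegral.integral_pos hac (by fun_prop) (fun x hx => ?_) ⟨a, haI, ?_⟩
  · have hxI := Ioc_subset_Icc_self hx
    exact add_nonneg (mul_nonneg (hr0 x hxI).le (sq_nonneg _))
      (mul_nonneg (hs0 x hxI) (sq_nonneg _))
  · exact add_pos_of_pos_of_nonneg (mul_pos (hr0 a haI) (sq_pos_of_ne_zero hz'a))
      (mul_nonneg (hs0 a haI) (sq_nonneg _))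

end SturmLiouville

theorem stmt_11_general {a c κ μ : ℝ} {b z z' w w' : ℝ → ℝ} (hac : a < c) (hμ : 0 ≤ μ)
    (hb : ContinuousOn b (Icc a c)) (hbpos : ∀ x ∈ Icc a c, 0 < b x)
    (hz : ∀ x ∈ Icc a c, HasDerivWithinAt z (z' x) (Icc a c) x)
    (hzc : ContinuousOn z' (Icc a c)) (hza : z a = 0) (hz'a : 0 < z' a)
    (hzode : ∀ x ∈ Ioo a c, HasDerivAt (fun y => b y ^ 3 * z' y) (μ * b x * z x) x)
    (hzbc : b c ^ 3 * z' c = κ * z c)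
    (hw : ∀ x ∈ Icc a c, HasDerivWithinAt w (w' x) (Icc a c) x)
    (hwc : ContinuousOn w' (Icc a c)) (hwa : w a = 0)
    (hwode : ∀ x ∈ Ioo a c, HasDerivAt (fun y => b y ^ 3 * w' y + 3 / 2 * b y * z' y)
      (μ * b x * w x + μ / (2 * b x) * z x) x) :
    b c ^ 3 * w' c + 3 / 2 * b c * z' c - κ * w c =
        (z c)⁻¹ * ∫ x in a..c, (3 * b x / 2 * z' x ^ 2 + μ / (2 * b x) * z x ^ 2) ∧
      0 < b c ^ 3 * w' c + 3 / 2 * b c * z' c - κ * w c := by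
  have hp : ContinuousOn (fun x => b x ^ 3) (Icc a c) := hb.pow 3
  have hr : ContinuousOn (fun x => 3 / 2 * b x) (Icc a c) := continuousOn_const.mul hb
  have hs : ContinuousOn (fun x => μ / (2 * b x)) (Icc a c) :=
    continuousOn_const.div (continuousOn_const.mul hb) fun x hx =>
      (mul_pos two_pos (hbpos x hx)).ne'
  have hzpos : 0 < z c := pos_right_of_sturmLiouville hac hp
    (fun x hx => pow_pos (hbpos x hx) 3)
    (fun x hx => mul_nonneg hμ (hbpos x (Ioo_subset_Icc_self hx)).le) hzc hz hzode hza.ge hz'a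
  have hpos := integral_mul_deriv_sq_add_mul_sq_pos hac hr hs
    (fun x hx => mul_pos (by norm_num) (hbpos x hx))
    (fun x hx => div_nonneg hμ (mul_pos two_pos (hbpos x hx)).le)
    (HasDerivWithinAt.continuousOn hz) hzc hz'a.ne'
  have hlagrange := integral_eq_lagrangeBracket_sub hac.le hp hr hs hzc hwc hz hw hzode hwode
  rw [lagrangeBracket_eq_zero hza hwa, sub_zero, lagrangeBracket_eq_mul_of_robin hzbc] at hlagrange
  simp only [mul_div_right_comm]
  rw [hlagrange] at hpos ⊢
  exact ⟨(inv_mul_cancel_left₀ hzpos.ne' _).symm, pos_of_mul_pos_right hpos hzpos.le⟩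


open Set

/-- With `b(p) := √(λ̄ − 2Γ(p))` and `μ̄ ≥ 0`, if `z` solves `(b³z′)′ = μ̄ b z`
with `z(p₀)=0, z′(p₀)=1` and `λ̄^{3/2} z′(0) = (g+σμ̄) z(0)`, and `w(p₀) = w′(p₀) = 0` with
`p ↦ b³w′ + (3/2) b z′` differentiable on `(p₀,0)` with derivative `μ̄ b w + (μ̄/(2b)) z`,
then `λ̄^{3/2} w′(0) + (3/2) λ̄^{1/2} z′(0) − (g+σμ̄) w(0)`
`= (1/z(0)) ∫_{p₀}^0 ((3b/2)(z′)² + (μ̄/(2b)) z²) dp > 0`. -/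
theorem stmt_11 (p₀ g σ lam μ : ℝ) (hp₀ : p₀ < 0) (hg : 0 < g) (hσ : 0 < σ)
    (hlam : 0 < lam) (hμ : 0 ≤ μ)
    (Γ : ℝ → ℝ) (K : NNReal) (hΓ : LipschitzOnWith K Γ (Set.Icc p₀ 0)) (hΓ0 : Γ 0 = 0)
    (hlamΓ : 2 * sSup (Γ '' Set.Icc p₀ 0) < lam)
    (z z' w w' : ℝ → ℝ)
    (hz : ∀ p ∈ Set.Icc p₀ 0, HasDerivWithinAt z (z' p) (Set.Icc p₀ 0) p)
    (hzc : ContinuousOn z' (Set.Icc p₀ 0))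
    (hz0 : z p₀ = 0) (hz1 : z' p₀ = 1)
    (hzode : ∀ p ∈ Set.Ioo p₀ 0,
      HasDerivAt (fun s => Real.sqrt (lam - 2 * Γ s) ^ 3 * z' s)
        (μ * Real.sqrt (lam - 2 * Γ p) * z p) p)
    (hzbc : Real.sqrt lam ^ 3 * z' 0 = (g + σ * μ) * z 0)
    (hw : ∀ p ∈ Set.Icc p₀ 0, HasDerivWithinAt w (w' p) (Set.Icc p₀ 0) p)
    (hwc : ContinuousOn w' (Set.Icc p₀ 0))
    (hw0 : w p₀ = 0) (hw1 : w' p₀ = 0)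
    (hwode : ∀ p ∈ Set.Ioo p₀ 0,
      HasDerivAt
        (fun s => Real.sqrt (lam - 2 * Γ s) ^ 3 * w' s
          + 3 / 2 * Real.sqrt (lam - 2 * Γ s) * z' s)
        (μ * Real.sqrt (lam - 2 * Γ p) * w p
          + μ / (2 * Real.sqrt (lam - 2 * Γ p)) * z p) p) :
    Real.sqrt lam ^ 3 * w' 0 + 3 / 2 * Real.sqrt lam * z' 0 - (g + σ * μ) * w 0
        = (z 0)⁻¹ * ∫ p in p₀..0,
            (3 * Real.sqrt (lam - 2 * Γ p) / 2 * z' p ^ 2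
              + μ / (2 * Real.sqrt (lam - 2 * Γ p)) * z p ^ 2) ∧
      0 < Real.sqrt lam ^ 3 * w' 0 + 3 / 2 * Real.sqrt lam * z' 0 - (g + σ * μ) * w 0 := by
  have hb : ContinuousOn (fun p => Real.sqrt (lam - 2 * Γ p)) (Icc p₀ 0) :=
    (continuousOn_const.sub (continuousOn_const.mul hΓ.continuousOn)).sqrt
  have hbpos : ∀ p ∈ Icc p₀ 0, 0 < Real.sqrt (lam - 2 * Γ p) := fun p hp =>
    Real.sqrt_pos.2 (by linarith [hΓ.continuousOn.le_sSup_image_Icc hp])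
  have hb0 : Real.sqrt lam = Real.sqrt (lam - 2 * Γ 0) := by rw [hΓ0, mul_zero, sub_zero]
  rw [hb0] at hzbc ⊢
  exact stmt_11_general hp₀ hμ hb hbpos hz hzc hz0 (hz1 ▸ one_pos) hzode hzbc hw hwc hw0 hwode
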